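/- arXiv:2403.06262 — 2 statements merged into one kernel-verified Lean document; each statement's English description precedes it below -/
import Mathlib

section
/- A bounded linear operator T : H → Y from a Hilbert space H to a Banach space Y is compact if and only if ‖T x_n‖ → 0 for every orthonormal sequence (x_n) in H. -/
open Filter

/-!
If infinitely many `T (x i)`, with `x` orthonormal, lie within `r` of a point `y`, then averaging
`N` of them gives `‖y‖ ≤ r`, because the average of the `x i` has norm `1 / √N`. When `T` maps the
unit ball to a totally bounded set, infinitely many values of norm at least `ε` would have
infinitely many members in one ball of radius `ε / 2`; its centre then has norm at most `ε / 2`,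
which is absurd.

Conversely, if for some `ε > 0` no finite-dimensional subspace `U` satisfied `‖T v‖ ≤ ε ‖v‖` on
`Uᗮ`, one could choose inductively an orthonormal sequence with `‖T (x n)‖ > ε`. Hence the image of
the unit ball is, up to any `ε`, the image of the unit ball of a finite-dimensional subspace.
-/

theorem isCompact_closure_iff_totallyBounded {α : Type*} [UniformSpace α] [CompleteSpace α]
    {s : Set α} : IsCompact (closure s) ↔ TotallyBounded s :=
  ⟨fun h => totallyBounded_closure.1 h.totallyBounded,
    fun h => h.closure.isCompact_of_isClosed isClosed_closure⟩

theorem totallyBounded_of_forall_subset_thickening {α : Type*} [PseudoMetricSpace α] {s : Set α}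
    (h : ∀ ε > 0, ∃ K, TotallyBounded K ∧ s ⊆ Metric.thickening ε K) : TotallyBounded s := by
  rw [Metric.totallyBounded_iff]
  intro ε hε
  obtain ⟨K, hK, hsK⟩ := h (ε / 2) (half_pos hε)
  obtain ⟨t, ht, hKt⟩ := Metric.totallyBounded_iff.1 hK (ε / 2) (half_pos hε)
  refine ⟨t, ht, ?_⟩
  calc
    s ⊆ Metric.thickening (ε / 2) K := hsK
    _ ⊆ Metric.thickening (ε / 2) (Metric.thickening (ε / 2) t) :=
      Metric.thickening_subset_of_subset _ (by rwa [Metric.thickening_eq_biUnion_ball])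
    _ ⊆ Metric.thickening (ε / 2 + ε / 2) t := Metric.thickening_thickening_subset _ _ _
    _ = ⋃ c ∈ t, Metric.ball c ε := by rw [add_halves, Metric.thickening_eq_biUnion_ball]

theorem norm_map_le_mul_norm_of_unit_bound {𝕜 E F : Type*} [RCLike 𝕜] [NormedAddCommGroup E]
    [NormedSpace 𝕜 E] [SeminormedAddCommGroup F] [NormedSpace 𝕜 F] (T : E →ₗ[𝕜] F) {C : ℝ}
    (hT : ∀ u, ‖u‖ = 1 → ‖T u‖ ≤ C) (x : E) : ‖T x‖ ≤ C * ‖x‖ := by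
  rcases eq_or_ne x 0 with rfl | hx
  · simp
  · have hunit := hT _ (norm_smul_inv_norm (𝕜 := 𝕜) hx)
    rwa [map_smul, norm_smul, norm_inv, RCLike.norm_ofReal, abs_norm,
      inv_mul_le_iff₀ (norm_pos_iff.2 hx), mul_comm] at hunit

theorem totallyBounded_image_of_finiteDimensional {𝕜 E F : Type*} [NontriviallyNormedField 𝕜]
    [ProperSpace 𝕜] [NormedAddCommGroup E] [NormedSpace 𝕜 E] [FiniteDimensional 𝕜 E]
    [SeminormedAddCommGroup F] [NormedSpace 𝕜 F] (T : E →ₗ[𝕜] F) {s : Set E}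
    (hs : Bornology.IsBounded s) : TotallyBounded (T '' s) :=
  have : ProperSpace E := FiniteDimensional.proper 𝕜 E
  (hs.isCompact_closure.image T.continuous_of_finiteDimensional).totallyBounded.subset
    (Set.image_mono subset_closure)

section OrthonormalFamilies

variable {𝕜 H Y ι : Type*} [RCLike 𝕜] [SeminormedAddCommGroup H] [InnerProductSpace 𝕜 H]
  [SeminormedAddCommGroup Y] [NormedSpace 𝕜 Y] {x : ι → H}

theorem norm_sum_of_orthonormal (hx : Orthonormal 𝕜 x) (s : Finset ι) :
    ‖∑ i ∈ s, x i‖ = √s.card := by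
  have hinner : inner 𝕜 (∑ i ∈ s, x i) (∑ i ∈ s, x i) = (s.card : 𝕜) := by
    simpa using hx.inner_sum (fun _ => 1) (fun _ => 1) s
  rw [norm_eq_sqrt_re_inner (𝕜 := 𝕜), hinner, RCLike.natCast_re]

theorem card_mul_norm_le_of_orthonormal (hx : Orthonormal 𝕜 x) {T : H →ₗ[𝕜] Y} {C : ℝ}
    (hT : ∀ v, ‖T v‖ ≤ C * ‖v‖) {y : Y} {r : ℝ} {s : Finset ι}
    (hs : ∀ i ∈ s, dist y (T (x i)) ≤ r) : s.card * ‖y‖ ≤ s.card * r + C * √s.card := by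
  calc
    s.card * ‖y‖ = ‖s.card • y‖ := by
      rw [← Nat.cast_smul_eq_nsmul 𝕜, norm_smul, RCLike.norm_natCast]
    _ = ‖∑ i ∈ s, (y - T (x i)) + T (∑ i ∈ s, x i)‖ := by simp
    _ ≤ ‖∑ i ∈ s, (y - T (x i))‖ + ‖T (∑ i ∈ s, x i)‖ := norm_add_le _ _
    _ ≤ s.card * r + C * √s.card := by
      gcongr
      · simpa only [Finset.sum_const, nsmul_eq_mul] using
          norm_sum_le_of_le s fun i hi => (dist_eq_norm y _).symm.trans_le (hs i hi)
      · exact norm_sum_of_orthonormal hx s ▸ hT _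

theorem norm_le_of_infinite_dist_le (hx : Orthonormal 𝕜 x) {T : H →ₗ[𝕜] Y} {C : ℝ}
    (hT : ∀ v, ‖T v‖ ≤ C * ‖v‖) {y : Y} {r : ℝ} (hy : {i | dist y (T (x i)) ≤ r}.Infinite) :
    ‖y‖ ≤ r := by
  by_contra! hr
  obtain ⟨m, hm⟩ := exists_nat_gt (max 0 (C / (‖y‖ - r)))
  obtain ⟨hm_pos, hm_large⟩ := max_lt_iff.1 hm
  obtain ⟨s, hs, hcard⟩ := hy.exists_subset_card_eq (m ^ 2)
  have havg := card_mul_norm_le_of_orthonormal hx hT hs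
  rw [hcard, Nat.cast_pow, Real.sqrt_sq hm_pos.le] at havg
  rw [div_lt_iff₀ (sub_pos.2 hr)] at hm_large
  nlinarith

end OrthonormalFamilies

section UnitBallImage

variable {𝕜 H Y : Type*} [RCLike 𝕜] [NormedAddCommGroup H] [InnerProductSpace 𝕜 H]
  [SeminormedAddCommGroup Y] [NormedSpace 𝕜 Y] {T : H →ₗ[𝕜] Y}

theorem finite_setOf_le_norm_of_totallyBounded
    (hT : TotallyBounded (T '' Metric.closedBall 0 1)) {ι : Type*} {x : ι → H}
    (hx : Orthonormal 𝕜 x) {ε : ℝ} (hε : 0 < ε) : {i | ε ≤ ‖T (x i)‖}.Finite := by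
  obtain ⟨C, hC⟩ := hT.isBounded.exists_norm_le
  have hbound : ∀ v, ‖T v‖ ≤ C * ‖v‖ := norm_map_le_mul_norm_of_unit_bound T fun u hu =>
    hC _ ⟨u, mem_closedBall_zero_iff.2 hu.le, rfl⟩
  obtain ⟨t, ht, hcover⟩ := Metric.totallyBounded_iff.1 hT (ε / 2) (half_pos hε)
  have hfiber : ∀ c ∈ t, {i | ε ≤ ‖T (x i)‖ ∧ dist (T (x i)) c < ε / 2}.Finite := by
    intro c _
    by_contra hinf
    obtain ⟨i, hi, hic⟩ := Set.Infinite.nonempty hinf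
    have hc : ‖c‖ ≤ ε / 2 := norm_le_of_infinite_dist_le hx hbound <|
      Set.Infinite.mono (fun j hj => (dist_comm c _).trans_le hj.2.le) hinf
    have htri : ‖T (x i)‖ ≤ dist (T (x i)) c + ‖c‖ := by
      simpa only [dist_zero_right] using dist_triangle (T (x i)) c 0
    linarith
  refine (ht.biUnion hfiber).subset fun i hi => ?_
  obtain ⟨c, hct, hic⟩ := Set.mem_iUnion₂.1 <|
    hcover ⟨x i, mem_closedBall_zero_iff.2 (hx.norm_eq_one i).le, rfl⟩
  exact Set.mem_biUnion hct ⟨hi, hic⟩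

theorem tendsto_norm_cofinite_of_totallyBounded
    (hT : TotallyBounded (T '' Metric.closedBall 0 1)) {ι : Type*} {x : ι → H}
    (hx : Orthonormal 𝕜 x) : Tendsto (fun i => ‖T (x i)‖) cofinite (nhds 0) := by
  rw [← tendsto_zero_iff_norm_tendsto_zero, Metric.tendsto_nhds]
  intro ε hε
  simpa only [eventually_cofinite, dist_zero_right, not_lt] using
    finite_setOf_le_norm_of_totallyBounded hT hx hε

theorem exists_orthonormal_seq_of_forall_finiteDimensional {p : H → Prop}
    (hp : ∀ U : Submodule 𝕜 H, FiniteDimensional 𝕜 U → ∃ u ∈ Uᗮ, ‖u‖ = 1 ∧ p u) :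
    ∃ x : ℕ → H, Orthonormal 𝕜 x ∧ ∀ n, p (x n) := by
  have : Std.Symm fun u v : H => inner 𝕜 u v = 0 := ⟨fun _ _ => inner_eq_zero_symm.1⟩
  obtain ⟨x, hx, horth⟩ := exists_seq_of_forall_finset_exists'
    (fun u : H => ‖u‖ = 1 ∧ p u) (fun u v => inner 𝕜 u v = 0) fun s _ => by
      obtain ⟨u, hu, hpu⟩ := hp (Submodule.span 𝕜 s) (FiniteDimensional.span_finset 𝕜 s)
      exact ⟨u, hpu, fun v hv => hu v (Submodule.subset_span hv)⟩
  exact ⟨x, ⟨fun n => (hx n).1, horth⟩, fun n => (hx n).2⟩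

theorem exists_finiteDimensional_norm_le_on_orthogonal
    (hT : ∀ x : ℕ → H, Orthonormal 𝕜 x → Tendsto (fun n => ‖T (x n)‖) atTop (nhds 0))
    {ε : ℝ} (hε : 0 < ε) :
    ∃ U : Submodule 𝕜 H, FiniteDimensional 𝕜 U ∧ ∀ v ∈ Uᗮ, ‖T v‖ ≤ ε * ‖v‖ := by
  by_contra! hlarge
  have hunit : ∀ U : Submodule 𝕜 H, FiniteDimensional 𝕜 U →
      ∃ u ∈ Uᗮ, ‖u‖ = 1 ∧ ε < ‖T u‖ := by
    intro U hU
    by_contra! hsmall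
    obtain ⟨v, hv, hlt⟩ := hlarge U hU
    exact hlt.not_ge <| norm_map_le_mul_norm_of_unit_bound (T.domRestrict Uᗮ)
      (fun u hu => hsmall u u.2 hu) ⟨v, hv⟩
  obtain ⟨x, hx, hεx⟩ := exists_orthonormal_seq_of_forall_finiteDimensional hunit
  exact hε.not_ge <| ge_of_tendsto' (hT x hx) fun n => (hεx n).le

theorem totallyBounded_image_closedBall_of_norm_le_on_orthogonal
    (hT : ∀ ε > 0, ∃ U : Submodule 𝕜 H, FiniteDimensional 𝕜 U ∧ ∀ v ∈ Uᗮ, ‖T v‖ ≤ ε * ‖v‖) :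
    TotallyBounded (T '' Metric.closedBall 0 1) := by
  refine totallyBounded_of_forall_subset_thickening fun ε hε => ?_
  obtain ⟨U, hU, hsmall⟩ := hT (ε / 2) (half_pos hε)
  refine ⟨T.domRestrict U '' Metric.closedBall 0 1,
    totallyBounded_image_of_finiteDimensional _ Metric.isBounded_closedBall, ?_⟩
  rintro _ ⟨v, hv, rfl⟩
  rw [mem_closedBall_zero_iff] at hv
  have hproj : ‖U.orthogonalProjectionOnto v‖ ≤ 1 :=
    (U.norm_orthogonalProjectionOnto_apply_le v).trans hv
  refine Metric.mem_thickening_iff.2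
    ⟨_, ⟨U.orthogonalProjectionOnto v, mem_closedBall_zero_iff.2 hproj, rfl⟩, ?_⟩
  calc
    dist (T v) (T (U.starProjection v)) = ‖T (v - U.starProjection v)‖ := by
      rw [dist_eq_norm, map_sub]
    _ ≤ ε / 2 * ‖v - U.starProjection v‖ := hsmall _ (U.sub_starProjection_mem_orthogonal v)
    _ ≤ ε / 2 * ‖v‖ := by
      rw [← U.starProjection_orthogonal_val]
      gcongr
      exact Uᗮ.norm_starProjection_apply_le v
    _ ≤ ε / 2 := mul_le_of_le_one_right (half_pos hε).le hv
    _ < ε := half_lt_self hε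

end UnitBallImage

theorem compact_iff_norm_null_on_orthonormal_sequences_general
    {𝕜 H Y : Type*} [RCLike 𝕜] [NormedAddCommGroup H] [InnerProductSpace 𝕜 H]
    [SeminormedAddCommGroup Y] [NormedSpace 𝕜 Y] (T : H →ₗ[𝕜] Y) :
    TotallyBounded (T '' Metric.closedBall (0 : H) 1) ↔
      ∀ x : ℕ → H, Orthonormal 𝕜 x →
        Tendsto (fun n => ‖T (x n)‖) atTop (nhds 0) := by
  constructor
  · intro hT x hx
    exact Nat.cofinite_eq_atTop ▸ tendsto_norm_cofinite_of_totallyBounded hT hx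
  · intro hT
    exact totallyBounded_image_closedBall_of_norm_le_on_orthogonal fun _ hε =>
      exists_finiteDimensional_norm_le_on_orthogonal hT hε

theorem compact_iff_norm_null_on_orthonormal_sequences
    {𝕜 H Y : Type*} [RCLike 𝕜] [NormedAddCommGroup H] [InnerProductSpace 𝕜 H]
    [CompleteSpace H] [NormedAddCommGroup Y] [NormedSpace 𝕜 Y] [CompleteSpace Y]
    (T : H →L[𝕜] Y) :
    IsCompact (closure (T '' Metric.closedBall (0 : H) 1)) ↔
      ∀ x : ℕ → H, Orthonormal 𝕜 x →
        Tendsto (fun n => ‖T (x n)‖) atTop (nhds 0) :=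
  isCompact_closure_iff_totallyBounded.trans
    (compact_iff_norm_null_on_orthonormal_sequences_general T.toLinearMap)
end

section
/- Let (z_n) be a sequence of unit vectors in a Hilbert space H with |⟨z_i, z_j⟩| ≤ 2^{-2(i+j)} for all i ≠ j. Then there exists an orthonormal sequence (x_n) in H with ‖x_n − z_n‖ ≤ 2^{-n} for all n. -/
open scoped InnerProductSpace

/-!
Suppose the unit vectors `z i` satisfy `‖⟪z i, z j⟫‖ ≤ a i * a j` for `i ≠ j`. Adding the diagonal
terms to the off-diagonal part of `‖∑ i, c i • z i‖ ^ 2` gives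
`∑ i, ‖c i‖ ^ 2 * (1 + a i ^ 2) ≤ ‖∑ i, c i • z i‖ ^ 2 + (∑ i, ‖c i‖ * a i) ^ 2`,
and by Cauchy–Schwarz the last square is at most `σ = ∑ i, a i ^ 2 / (1 + a i ^ 2)` times the
left-hand side. When `σ < 1` this is a Riesz lower bound, so the `z i` are linearly independent, and
it bounds the projection `p` of `z n` onto the span of its predecessors by
`‖p‖ ^ 2 ≤ σ / (1 - σ) * a n ^ 2`. The Gram–Schmidt vector `z n - p` is thus close to `z n`, and
normalizing it at most doubles the squared error.

Keeping the diagonal terms is what admits `a i = 4 ^ (-i)`: there `∑ i, a i ^ 2 = 16 / 15` exceeds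
`1`, while `σ ≤ 1 / 2 + ∑ i ≥ 1, 16 ^ (-i) = 17 / 30`.
-/

open Finset InnerProductSpace

/-- The quantity `σ` that controls a finite family of unit vectors with
`‖⟪z i, z j⟫‖ ≤ a i * a j` for `i ≠ j`: the family is nondegenerate as soon as `σ < 1`. -/
noncomputable def overlapMass {ι : Type*} (a : ι → ℝ) (s : Finset ι) : ℝ :=
  ∑ i ∈ s, a i ^ 2 / (1 + a i ^ 2)

section OverlapMass

variable {ι : Type*} (a : ι → ℝ)

lemma overlapMass_nonneg (s : Finset ι) : 0 ≤ overlapMass a s :=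
  sum_nonneg fun _ _ => by positivity

lemma overlapMass_mono : Monotone (overlapMass a) := fun _ _ hst =>
  sum_le_sum_of_subset_of_nonneg hst fun _ _ _ => by positivity

lemma sq_sum_mul_le_overlapMass_mul (s : Finset ι) (t : ι → ℝ) :
    (∑ i ∈ s, t i * a i) ^ 2 ≤ overlapMass a s * ∑ i ∈ s, t i ^ 2 * (1 + a i ^ 2) :=
  sum_sq_le_sum_mul_sum_of_sq_le_mul s (fun _ _ => by positivity) (fun _ _ => by positivity)
    fun _ _ => le_of_eq (by field)

end OverlapMass

section AlmostOrthogonal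

variable {𝕜 E ι : Type*} [RCLike 𝕜] [SeminormedAddCommGroup E] [InnerProductSpace 𝕜 E]
  {z : ι → E} {a : ι → ℝ} {s : Finset ι}

lemma sum_sq_mul_le_norm_sum_smul_sq_add (hz : ∀ i ∈ s, ‖z i‖ = 1)
    (ho : (s : Set ι).Pairwise fun i j => ‖⟪z i, z j⟫_𝕜‖ ≤ a i * a j) (c : ι → 𝕜) :
    ∑ i ∈ s, ‖c i‖ ^ 2 * (1 + a i ^ 2) ≤
      ‖∑ i ∈ s, c i • z i‖ ^ 2 + (∑ i ∈ s, ‖c i‖ * a i) ^ 2 := by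
  classical
  have entry : ∀ i ∈ s, ∀ j ∈ s, (if i = j then ‖c i‖ ^ 2 * (1 + a i ^ 2) else 0) ≤
      RCLike.re ⟪c i • z i, c j • z j⟫_𝕜 + ‖c i‖ * a i * (‖c j‖ * a j) := by
    intro i hi j hj
    split_ifs with hij
    · subst hij
      rw [inner_self_eq_norm_sq, norm_smul, hz i hi]
      exact le_of_eq (by ring)
    · have overlap : ‖⟪c i • z i, c j • z j⟫_𝕜‖ ≤ ‖c i‖ * ‖c j‖ * (a i * a j) := by
        rw [inner_smul_left, inner_smul_right, norm_mul, norm_mul, RCLike.norm_conj, ← mul_assoc]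
        exact mul_le_mul_of_nonneg_left (ho hi hj hij) (by positivity)
      linarith [neg_le_of_abs_le (RCLike.abs_re_le_norm ⟪c i • z i, c j • z j⟫_𝕜)]
  calc ∑ i ∈ s, ‖c i‖ ^ 2 * (1 + a i ^ 2)
      = ∑ i ∈ s, ∑ j ∈ s, if i = j then ‖c i‖ ^ 2 * (1 + a i ^ 2) else 0 :=
        sum_congr rfl fun i hi => by rw [sum_ite_eq, if_pos hi]
    _ ≤ ∑ i ∈ s, ∑ j ∈ s,
          (RCLike.re ⟪c i • z i, c j • z j⟫_𝕜 + ‖c i‖ * a i * (‖c j‖ * a j)) :=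
        sum_le_sum fun i hi => sum_le_sum fun j hj => entry i hi j hj
    _ = ‖∑ i ∈ s, c i • z i‖ ^ 2 + (∑ i ∈ s, ‖c i‖ * a i) ^ 2 := by
        rw [← inner_self_eq_norm_sq (𝕜 := 𝕜), sum_inner, sq, sum_mul_sum]
        simp only [inner_sum, map_sum, sum_add_distrib]

lemma one_sub_overlapMass_mul_sum_le_norm_sum_smul_sq (hz : ∀ i ∈ s, ‖z i‖ = 1)
    (ho : (s : Set ι).Pairwise fun i j => ‖⟪z i, z j⟫_𝕜‖ ≤ a i * a j) (c : ι → 𝕜) :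
    (1 - overlapMass a s) * ∑ i ∈ s, ‖c i‖ ^ 2 * (1 + a i ^ 2) ≤ ‖∑ i ∈ s, c i • z i‖ ^ 2 := by
  linarith [sum_sq_mul_le_norm_sum_smul_sq_add hz ho c,
    sq_sum_mul_le_overlapMass_mul a s fun i => ‖c i‖]

theorem linearIndependent_of_overlapMass_lt_one (hz : ∀ i, ‖z i‖ = 1)
    (ho : Pairwise fun i j => ‖⟪z i, z j⟫_𝕜‖ ≤ a i * a j)
    (ha : ∀ s : Finset ι, overlapMass a s < 1) : LinearIndependent 𝕜 z := by
  refine linearIndependent_iff'.2 fun s c hc i hi => ?_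
  have riesz := one_sub_overlapMass_mul_sum_le_norm_sum_smul_sq (fun i _ => hz i)
    (ho.set_pairwise (s : Set ι)) c
  rw [hc, norm_zero, zero_pow two_ne_zero] at riesz
  have term_le : ‖c i‖ ^ 2 * (1 + a i ^ 2) ≤ ∑ i ∈ s, ‖c i‖ ^ 2 * (1 + a i ^ 2) :=
    single_le_sum (f := fun i => ‖c i‖ ^ 2 * (1 + a i ^ 2)) (fun _ _ => by positivity) hi
  have term_nonpos := term_le.trans (nonpos_of_mul_nonpos_right riesz (sub_pos.2 (ha s)))
  have norm_sq_nonpos := nonpos_of_mul_nonpos_left term_nonpos (by positivity)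
  exact norm_eq_zero.1 ((sq_nonpos_iff _).1 norm_sq_nonpos)

lemma norm_inner_sum_smul_le {w : E} {b : ℝ} (hw : ∀ i ∈ s, ‖⟪z i, w⟫_𝕜‖ ≤ a i * b) (c : ι → 𝕜) :
    ‖⟪∑ i ∈ s, c i • z i, w⟫_𝕜‖ ≤ (∑ i ∈ s, ‖c i‖ * a i) * b := by
  rw [sum_inner, sum_mul]
  refine norm_sum_le_of_le s fun i hi => ?_
  rw [inner_smul_left, norm_mul, RCLike.norm_conj, mul_assoc]
  exact mul_le_mul_of_nonneg_left (hw i hi) (norm_nonneg _)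

lemma norm_sq_projection_span_le (hz : ∀ i ∈ s, ‖z i‖ = 1)
    (ho : (s : Set ι).Pairwise fun i j => ‖⟪z i, z j⟫_𝕜‖ ≤ a i * a j)
    (ha : overlapMass a s < 1) {w p : E} {b : ℝ} (hw : ∀ i ∈ s, ‖⟪z i, w⟫_𝕜‖ ≤ a i * b)
    (hp : p ∈ Submodule.span 𝕜 (z '' s)) (hpw : ⟪p, w - p⟫_𝕜 = 0) :
    ‖p‖ ^ 2 ≤ overlapMass a s / (1 - overlapMass a s) * b ^ 2 := by
  obtain ⟨c, rfl⟩ := Submodule.mem_span_image_finset_iff_exists_fun' 𝕜 |>.1 hp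
  set p := ∑ i ∈ s, c i • z i
  set σ := overlapMass a s
  set A := ∑ i ∈ s, ‖c i‖ * a i
  have norm_sq_le : ‖p‖ ^ 2 ≤ A * b := by
    rw [← inner_self_eq_norm_sq (𝕜 := 𝕜), inner_self_re_eq_norm,
      ← sub_eq_zero.1 ((inner_sub_right p w p).symm.trans hpw)]
    exact norm_inner_sum_smul_le hw c
  have hσ : 0 < 1 - σ := sub_pos.2 ha
  have A_sq_le : (1 - σ) * A ^ 2 ≤ σ * ‖p‖ ^ 2 := calc
    _ ≤ (1 - σ) * (σ * ∑ i ∈ s, ‖c i‖ ^ 2 * (1 + a i ^ 2)) :=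
      mul_le_mul_of_nonneg_left (sq_sum_mul_le_overlapMass_mul a s _) hσ.le
    _ = σ * ((1 - σ) * ∑ i ∈ s, ‖c i‖ ^ 2 * (1 + a i ^ 2)) := by ring
    _ ≤ σ * ‖p‖ ^ 2 :=
      mul_le_mul_of_nonneg_left (one_sub_overlapMass_mul_sum_le_norm_sum_smul_sq hz ho c)
        (overlapMass_nonneg a s)
  rw [div_mul_eq_mul_div, le_div_iff₀' hσ]
  rcases (sq_nonneg ‖p‖).eq_or_lt with hp0 | hp0
  · rw [← hp0, mul_zero]
    exact mul_nonneg (overlapMass_nonneg a s) (sq_nonneg b)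
  · refine le_of_mul_le_mul_right ?_ hp0
    calc (1 - σ) * ‖p‖ ^ 2 * ‖p‖ ^ 2 = (1 - σ) * (‖p‖ ^ 2) ^ 2 := by ring
      _ ≤ (1 - σ) * (A * b) ^ 2 := by gcongr
      _ = (1 - σ) * A ^ 2 * b ^ 2 := by ring
      _ ≤ σ * ‖p‖ ^ 2 * b ^ 2 := by gcongr
      _ = σ * b ^ 2 * ‖p‖ ^ 2 := by ring

end AlmostOrthogonal

section GramSchmidt

variable {𝕜 E : Type*} [RCLike 𝕜] [NormedAddCommGroup E] [InnerProductSpace 𝕜 E]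

lemma norm_inv_norm_smul_sub_sq_le {u v : E} (hv : ‖v‖ = 1) (huv : ⟪u, v - u⟫_𝕜 = 0) :
    ‖(‖u‖ : 𝕜)⁻¹ • u - v‖ ^ 2 ≤ 2 * ‖v - u‖ ^ 2 := by
  have pythagoras : ‖u‖ ^ 2 + ‖v - u‖ ^ 2 = 1 := by
    have := norm_add_sq_eq_norm_sq_add_norm_sq_of_inner_eq_zero _ _ huv
    rw [add_sub_cancel, hv] at this
    linarith
  have inner_eq : ⟪u, v⟫_𝕜 = (‖u‖ : 𝕜) ^ 2 := by
    rw [← inner_self_eq_norm_sq_to_K, ← sub_eq_zero, ← inner_sub_right, huv]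
  rcases eq_or_ne u 0 with rfl | hu
  · simp [hv]
  · have hu' : (‖u‖ : 𝕜) ≠ 0 := RCLike.ofReal_ne_zero.2 (norm_ne_zero_iff.2 hu)
    have norm_sub_sq_eq : ‖(‖u‖ : 𝕜)⁻¹ • u - v‖ ^ 2 = 2 - 2 * ‖u‖ := by
      rw [norm_sub_sq (𝕜 := 𝕜), norm_smul_inv_norm hu, hv, inner_smul_left, inner_eq, map_inv₀,
        RCLike.conj_ofReal, sq (‖u‖ : 𝕜), inv_mul_cancel_left₀ hu', RCLike.ofReal_re]
      ring
    have norm_le_one : ‖u‖ ≤ 1 := by nlinarith [sq_nonneg ‖v - u‖]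
    linarith [mul_nonneg (norm_nonneg u) (sub_nonneg.2 norm_le_one)]

variable {ι : Type*} [LinearOrder ι] [LocallyFiniteOrderBot ι] [WellFoundedLT ι]

variable (𝕜) in
lemma sub_gramSchmidt_mem_span (z : ι → E) (n : ι) :
    z n - gramSchmidt 𝕜 z n ∈ Submodule.span 𝕜 (z '' Set.Iio n) := by
  rw [← span_gramSchmidt_Iio 𝕜 z n, sub_eq_iff_eq_add'.2 (gramSchmidt_def'' 𝕜 z n)]
  exact Submodule.sum_mem _ fun i hi => Submodule.smul_mem _ _
    (Submodule.subset_span (Set.mem_image_of_mem _ (mem_Iio.1 hi)))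

variable (𝕜) in
lemma inner_gramSchmidt_eq_zero_of_mem_span {z : ι → E} {n : ι} {v : E}
    (hv : v ∈ Submodule.span 𝕜 (z '' Set.Iio n)) : ⟪gramSchmidt 𝕜 z n, v⟫_𝕜 = 0 := by
  have le_orthogonal : Submodule.span 𝕜 (z '' Set.Iio n) ≤ (𝕜 ∙ gramSchmidt 𝕜 z n)ᗮ := by
    rw [Submodule.span_le, Set.image_subset_iff]
    exact fun i hi => Submodule.mem_orthogonal_singleton_iff_inner_right.2
      (gramSchmidt_inv_triangular 𝕜 z hi)
  exact Submodule.mem_orthogonal_singleton_iff_inner_right.1 (le_orthogonal hv)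

lemma norm_gramSchmidtNormed_sub_sq_le {z : ι → E} {a : ι → ℝ} (hz : ∀ i, ‖z i‖ = 1)
    (ho : Pairwise fun i j => ‖⟪z i, z j⟫_𝕜‖ ≤ a i * a j) {n : ι}
    (ha : overlapMass a (Iio n) < 1) :
    ‖gramSchmidtNormed 𝕜 z n - z n‖ ^ 2 ≤
      2 * (overlapMass a (Iio n) / (1 - overlapMass a (Iio n)) * a n ^ 2) := by
  have mem_span := sub_gramSchmidt_mem_span 𝕜 z n
  have orthogonal := inner_gramSchmidt_eq_zero_of_mem_span 𝕜 mem_span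
  have projection_le : ‖z n - gramSchmidt 𝕜 z n‖ ^ 2 ≤
      overlapMass a (Iio n) / (1 - overlapMass a (Iio n)) * a n ^ 2 := by
    refine norm_sq_projection_span_le (fun i _ => hz i) (ho.set_pairwise _) ha
      (fun i hi => ho (mem_Iio.1 hi).ne) (by rwa [coe_Iio]) ?_
    rw [sub_sub_cancel, inner_eq_zero_symm, orthogonal]
  exact (norm_inv_norm_smul_sub_sq_le (hz n) orthogonal).trans
    (mul_le_mul_of_nonneg_left projection_le zero_le_two)

theorem almost_orthogonal_perturbation_of_orthonormal_general (z : ι → E) (a : ι → ℝ)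
    (hz : ∀ i, ‖z i‖ = 1) (ho : Pairwise fun i j => ‖⟪z i, z j⟫_𝕜‖ ≤ a i * a j)
    (ha : ∀ s : Finset ι, overlapMass a s < 1) :
    ∃ x : ι → E, Orthonormal 𝕜 x ∧ ∀ n, ‖x n - z n‖ ^ 2 ≤
      2 * (overlapMass a (Iio n) / (1 - overlapMass a (Iio n)) * a n ^ 2) :=
  ⟨gramSchmidtNormed 𝕜 z,
    gramSchmidtNormed_orthonormal (linearIndependent_of_overlapMass_lt_one hz ho ha),
    fun _ => norm_gramSchmidtNormed_sub_sq_le hz ho (ha _)⟩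

end GramSchmidt

section QuarterPowers

lemma overlapMass_quarter_pow_range_succ_le (k : ℕ) :
    overlapMass (fun i => (1 / 4 : ℝ) ^ i) (range (k + 1)) ≤
      17 / 30 - 1 / 15 * (1 / 16 : ℝ) ^ k := by
  induction k with
  | zero => norm_num [overlapMass]
  | succ k ih =>
    have last_le : ((1 / 4 : ℝ) ^ (k + 1)) ^ 2 / (1 + ((1 / 4 : ℝ) ^ (k + 1)) ^ 2) ≤
        (1 / 16 : ℝ) ^ (k + 1) := by
      rw [← pow_mul', pow_mul, show (1 / 4 : ℝ) ^ 2 = 1 / 16 by norm_num]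
      exact div_le_self (by positivity) (le_add_of_nonneg_right (by positivity))
    rw [overlapMass, sum_range_succ, ← overlapMass]
    linarith [pow_succ (1 / 16 : ℝ) k]

lemma overlapMass_quarter_pow_le (s : Finset ℕ) :
    overlapMass (fun i => (1 / 4 : ℝ) ^ i) s ≤ 17 / 30 := by
  obtain ⟨k, hk⟩ := s.exists_nat_subset_range
  have hmono := overlapMass_mono (fun i => (1 / 4 : ℝ) ^ i)
    (hk.trans (range_subset_range.2 k.le_succ))
  have : (0 : ℝ) ≤ (1 / 16 : ℝ) ^ k := by positivity
  linarith [overlapMass_quarter_pow_range_succ_le k]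

lemma two_mul_overlapMass_quarter_pow_div_le (n : ℕ) :
    2 * (overlapMass (fun i => (1 / 4 : ℝ) ^ i) (Iio n) /
      (1 - overlapMass (fun i => (1 / 4 : ℝ) ^ i) (Iio n)) * ((1 / 4 : ℝ) ^ n) ^ 2) ≤
      ((1 / 2 : ℝ) ^ n) ^ 2 := by
  rcases n.eq_zero_or_pos with rfl | hn
  · simp [overlapMass]
  · set σ := overlapMass (fun i => (1 / 4 : ℝ) ^ i) (Iio n)
    have hσ : σ ≤ 17 / 30 := overlapMass_quarter_pow_le _
    have ratio_le : σ / (1 - σ) ≤ 17 / 13 := by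
      rw [div_le_iff₀ (by linarith)]
      linarith
    have quarter_le : (1 / 4 : ℝ) ^ n ≤ 1 / 4 :=
      pow_le_of_le_one (by norm_num) (by norm_num) hn.ne'
    have half_sq : ((1 / 2 : ℝ) ^ n) ^ 2 = (1 / 4 : ℝ) ^ n := by
      rw [← pow_mul', pow_mul]
      norm_num
    rw [half_sq]
    calc 2 * (σ / (1 - σ) * ((1 / 4 : ℝ) ^ n) ^ 2)
        ≤ 2 * (17 / 13 * (1 / 4 * (1 / 4 : ℝ) ^ n)) := by
          rw [sq]
          gcongr
      _ ≤ (1 / 4 : ℝ) ^ n := by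
          linarith [pow_nonneg (by norm_num : (0 : ℝ) ≤ 1 / 4) n]

lemma half_pow_two_mul_add (i j : ℕ) :
    (1 / 2 : ℝ) ^ (2 * (i + j)) = (1 / 4 : ℝ) ^ i * (1 / 4 : ℝ) ^ j := by
  rw [pow_mul, pow_add]
  norm_num

end QuarterPowers

theorem almost_orthogonal_perturbation_of_orthonormal
    {𝕜 H : Type*} [RCLike 𝕜] [NormedAddCommGroup H] [InnerProductSpace 𝕜 H]
    [CompleteSpace H] (z : ℕ → H) (hz : ∀ n, ‖z n‖ = 1)
    (ho : ∀ i j : ℕ, i ≠ j → ‖⟪z i, z j⟫_𝕜‖ ≤ (1 / 2 : ℝ) ^ (2 * (i + j))) :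
    ∃ x : ℕ → H, Orthonormal 𝕜 x ∧ ∀ n : ℕ, ‖x n - z n‖ ≤ (1 / 2 : ℝ) ^ n := by
  obtain ⟨x, hx, hxz⟩ := almost_orthogonal_perturbation_of_orthonormal_general z
    (fun i => (1 / 4 : ℝ) ^ i) hz (fun i j hij => (ho i j hij).trans_eq (half_pow_two_mul_add i j))
    (fun s => (overlapMass_quarter_pow_le s).trans_lt (by norm_num))
  exact ⟨x, hx, fun n => le_of_sq_le_sq
    ((hxz n).trans (two_mul_overlapMass_quarter_pow_div_le n)) (by positivity)⟩
end
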